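/- Let w ∈ L²(ℝ) and let 𝓔 : ℝ → ℝ be twice continuously differentiable with 𝓔″ bounded. For f ∈ L²(Ω_D) define (A(f)h)(s,θ) := ½·∫_ℝ w(r−s)·𝓔′(½·(Rf)(r,θ))·(Rh)(r,θ) dr. Then for all f₁, f₂, h ∈ L²(Ω_D) with R(f₁−f₂) ∈ L⁴(Ω_S) and Rh ∈ L⁴(Ω_S): ‖A(f₁)h − A(f₂)h‖_{L²(Ω_S)} ≤ ½·‖w‖_{L²(ℝ)}·‖𝓔″‖_{L^∞(ℝ)}·‖R(f₁−f₂)‖_{L⁴(Ω_S)}·‖Rh‖_{L⁴(Ω_S)}. -/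

import Mathlib

open MeasureTheory Real Set

/-- The Radon transform of `f : ℝ² → ℝ`:
`(Rf)(s,θ) = ∫_ℝ f(s·u(θ) + σ·u(θ)^⊥) dσ` with `u(θ) = (cos θ, sin θ)`,
`u(θ)^⊥ = (-sin θ, cos θ)`. -/
noncomputable def radonT (f : ℝ × ℝ → ℝ) (s θ : ℝ) : ℝ :=
  ∫ σ : ℝ, f (s * Real.cos θ - σ * Real.sin θ, s * Real.sin θ + σ * Real.cos θ)

/-- The closed unit disk `Ω_D ⊆ ℝ²`. -/
def unitDisk : Set (ℝ × ℝ) := {x : ℝ × ℝ | x.1 ^ 2 + x.2 ^ 2 ≤ 1}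

/-- The sinogram domain `Ω_S = [-1,1] × [0,2π)`. -/
def sinoDom : Set (ℝ × ℝ) := Icc (-1 : ℝ) 1 ×ˢ Ico (0 : ℝ) (2 * π)

/-- The forward operator `F(f)(s,θ) = ∫_ℝ w(r-s) · 𝓔(½ (Rf)(r,θ)) dr`. -/
noncomputable def Fop (w E : ℝ → ℝ) (f : ℝ × ℝ → ℝ) (s θ : ℝ) : ℝ :=
  ∫ r : ℝ, w (r - s) * E ((1 / 2) * radonT f r θ)

/-- The derivative operator
`(A(f)h)(s,θ) = ½ ∫_ℝ w(r-s) · 𝓔'(½ (Rf)(r,θ)) · (Rh)(r,θ) dr`. -/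
noncomputable def Aop (w E' : ℝ → ℝ) (f h : ℝ × ℝ → ℝ) (s θ : ℝ) : ℝ :=
  (1 / 2) * ∫ r : ℝ, w (r - s) * E' ((1 / 2) * radonT f r θ) * radonT h r θ

open scoped ENNReal

lemma sq_aux {α : Type*} [MeasurableSpace α] (μ : Measure α) (f : α → ℝ) :
    eLpNorm f 2 μ ^ 2 = ∫⁻ x, ‖f x‖ₑ ^ 2 ∂μ := by
  have := eLpNorm_nnreal_pow_eq_lintegral (f := f) (μ := μ) (p := 2) (by norm_num)
  simpa using this

lemma rot_mp (θ : ℝ) : MeasurePreserving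
    (fun p : ℝ × ℝ => (p.1 * Real.cos θ - p.2 * Real.sin θ, p.1 * Real.sin θ + p.2 * Real.cos θ))
    volume volume := by
  refine ⟨by fun_prop, ?_⟩
  set L : ℝ × ℝ →ₗ[ℝ] ℝ × ℝ := Matrix.toLin (Module.Basis.finTwoProd ℝ) (Module.Basis.finTwoProd ℝ)
    !![Real.cos θ, -Real.sin θ; Real.sin θ, Real.cos θ] with hL
  have hdet : LinearMap.det L = 1 := by
    rw [hL, LinearMap.det_toLin, Matrix.det_fin_two_of]
    nlinarith [Real.sin_sq_add_cos_sq θ]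
  have heq : (fun p : ℝ × ℝ => (p.1 * Real.cos θ - p.2 * Real.sin θ,
      p.1 * Real.sin θ + p.2 * Real.cos θ)) = L := by
    funext p
    rw [hL, Matrix.toLin_finTwoProd_apply]
    ext <;> simp <;> ring
  rw [heq, Measure.map_linearMap_addHaar_eq_smul_addHaar volume (by rw [hdet]; norm_num), hdet]
  simp

/-- rotated function -/
noncomputable def rotF (f : ℝ × ℝ → ℝ) (θ : ℝ) : ℝ × ℝ → ℝ := fun p =>
  f (p.1 * Real.cos θ - p.2 * Real.sin θ, p.1 * Real.sin θ + p.2 * Real.cos θ)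

lemma rotF_memLp {f : ℝ × ℝ → ℝ} (hf : MemLp f 2 volume) (θ : ℝ) : MemLp (rotF f θ) 2 volume :=
  hf.comp_measurePreserving (rot_mp θ)

lemma rotF_zero {f : ℝ × ℝ → ℝ} (hs : Function.support f ⊆ unitDisk) (θ : ℝ) (p : ℝ × ℝ)
    (hp : 1 < p.1 ^ 2 + p.2 ^ 2) : rotF f θ p = 0 := by
  by_contra hne
  have := hs (show _ ∈ Function.support f from hne)
  simp only [unitDisk, mem_ofPred_eq] at this
  have h1 := Real.sin_sq_add_cos_sq θ
  have : (p.1 ^ 2 + p.2 ^ 2) * (Real.sin θ ^ 2 + Real.cos θ ^ 2) ≤ 1 := by nlinarith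
  rw [h1] at this
  linarith

lemma one_lt_sq' {x : ℝ} (hx : x ∉ Icc (-1:ℝ) 1) : 1 < x ^ 2 := by
  by_contra h
  exact hx (abs_le.1 ((sq_le_one_iff_abs_le_one x).1 (not_lt.1 h)))

lemma radonT_zero {f : ℝ × ℝ → ℝ} (hs : Function.support f ⊆ unitDisk) (θ s : ℝ)
    (h : s ∉ Icc (-1:ℝ) 1) : radonT f s θ = 0 := by
  have : ∀ σ, rotF f θ (s, σ) = 0 := fun σ => rotF_zero hs θ _ (by
    have := one_lt_sq' h; simp only; nlinarith [sq_nonneg σ])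
  show ∫ σ, rotF f θ (s, σ) = 0
  simp [this]

lemma rotF_integrable {f : ℝ × ℝ → ℝ} (hf : MemLp f 2 volume)
    (hs : Function.support f ⊆ unitDisk) (θ : ℝ) : Integrable (rotF f θ) volume := by
  set B := Icc (-1:ℝ) 1 ×ˢ Icc (-1:ℝ) 1
  have hB : volume B ≠ ⊤ := (isCompact_Icc.prod isCompact_Icc).measure_lt_top.ne
  have h1 : IntegrableOn (rotF f θ) B := by
    have : IsFiniteMeasure (volume.restrict B) := ⟨by simpa using hB.lt_top⟩
    exact ((rotF_memLp hf θ).restrict B).integrable (by norm_num)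
  rw [← integrableOn_iff_integrable_of_support_subset (s := B)]
  · exact h1
  · intro p hp
    by_contra hpB
    apply hp
    apply rotF_zero hs
    simp only [B, mem_prod, not_and_or] at hpB
    rcases hpB with h | h
    · have := one_lt_sq' h; nlinarith [sq_nonneg p.2]
    · have := one_lt_sq' h; nlinarith [sq_nonneg p.1]

lemma slice_integrable {f : ℝ × ℝ → ℝ} (hf : MemLp f 2 volume)
    (hs : Function.support f ⊆ unitDisk) (θ : ℝ) :
    ∀ᵐ s, Integrable (fun σ => rotF f θ (s, σ)) :=
  (rotF_integrable hf hs θ).prod_right_ae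

lemma radonT_sub {f g : ℝ × ℝ → ℝ} (hf : MemLp f 2 volume)
    (hs : Function.support f ⊆ unitDisk) (hg : MemLp g 2 volume)
    (hs' : Function.support g ⊆ unitDisk) (θ : ℝ) :
    ∀ᵐ s, radonT (f - g) s θ = radonT f s θ - radonT g s θ := by
  filter_upwards [slice_integrable hf hs θ, slice_integrable hg hs' θ] with s h1 h2
  exact integral_sub h1 h2

lemma radonT_memLp {f : ℝ × ℝ → ℝ} (hf : MemLp f 2 volume)
    (hs : Function.support f ⊆ unitDisk) (θ : ℝ) :
    MemLp (fun s => radonT f s θ) 2 volume := by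
  have hm := (rotF_memLp hf θ)
  have hmeas : AEStronglyMeasurable (fun s => radonT f s θ) volume :=
    AEStronglyMeasurable.integral_prod_right' (f := rotF f θ) hm.1
  refine ⟨hmeas, ?_⟩
  have key : ∀ᵐ s, ‖radonT f s θ‖ₑ ^ 2 ≤ 2 * ∫⁻ σ, ‖rotF f θ (s, σ)‖ₑ ^ 2 := by
    filter_upwards [slice_integrable hf hs θ] with s h1
    set B := Icc (-1:ℝ) 1
    have e1 : radonT f s θ = ∫ σ in B, rotF f θ (s, σ) := by
      show ∫ σ, rotF f θ (s, σ) = _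
      rw [setIntegral_eq_integral_of_forall_compl_eq_zero]
      intro σ hσ
      apply rotF_zero hs
      have := one_lt_sq' hσ
      simp only; nlinarith [sq_nonneg s]
    have e2 : ‖radonT f s θ‖ₑ ≤ eLpNorm (fun σ => rotF f θ (s, σ)) 1 (volume.restrict B) := by
      rw [e1, eLpNorm_one_eq_lintegral_enorm]
      exact enorm_integral_le_lintegral_enorm _
    have e3 := eLpNorm_le_eLpNorm_mul_rpow_measure_univ (p := 1) (q := 2)
      (μ := volume.restrict B) (by norm_num) h1.1.restrict
    calc ‖radonT f s θ‖ₑ ^ 2 ≤ _ := pow_le_pow_left₀ (zero_le) (e2.trans e3) 2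
      _ = 2 * ∫⁻ σ in B, ‖rotF f θ (s, σ)‖ₑ ^ 2 := by
        rw [mul_pow, sq_aux, mul_comm]
        congr 1
        rw [← ENNReal.rpow_natCast, ← ENNReal.rpow_mul]
        norm_num [B]
      _ ≤ _ := by gcongr; exact Measure.restrict_le_self
  have fin : ∫⁻ s, ‖radonT f s θ‖ₑ ^ 2 < ⊤ := by
    calc _ ≤ ∫⁻ s, 2 * ∫⁻ σ, ‖rotF f θ (s, σ)‖ₑ ^ 2 := lintegral_mono_ae key
      _ = 2 * ∫⁻ s, ∫⁻ σ, ‖rotF f θ (s, σ)‖ₑ ^ 2 := lintegral_const_mul' _ _ (by norm_num)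
      _ = 2 * eLpNorm (rotF f θ) 2 volume ^ 2 := by
        rw [sq_aux, Measure.volume_eq_prod, lintegral_prod]
        exact (hm.1.enorm.pow_const 2)
      _ < ⊤ := ENNReal.mul_lt_top (by norm_num) (ENNReal.pow_lt_top hm.2)
  rw [← sq_aux] at fin
  exact (ENNReal.pow_lt_top_iff.1 fin).resolve_right (by norm_num)

lemma deriv_lip {E : ℝ → ℝ} (hE : ContDiff ℝ 2 E) (hb : ∃ M : ℝ, ∀ x : ℝ, |deriv (deriv E) x| ≤ M)
    (x y : ℝ) : ‖deriv E x - deriv E y‖ₑ ≤ eLpNorm (deriv (deriv E)) ⊤ volume * ‖x - y‖ₑ := by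
  obtain ⟨M, hM⟩ := hb
  have h1 : ContDiff ℝ 1 (deriv E) := (contDiff_succ_iff_deriv (n := 1).1 hE).2.2
  have h2 : Continuous (deriv (deriv E)) := h1.continuous_deriv le_rfl
  set K := eLpNorm (deriv (deriv E)) ⊤ volume with hK
  have hKtop : K ≠ ⊤ :=
    (memLp_top_of_bound h2.aestronglyMeasurable M (Filter.Eventually.of_forall hM)).2.ne
  have hae : ∀ᵐ t, ‖deriv (deriv E) t‖ₑ ≤ K := by
    rw [hK, eLpNorm_exponent_top]
    exact ae_le_eLpNormEssSup
  have hall : ∀ t, ‖deriv (deriv E) t‖ ≤ K.toReal := by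
    intro t
    by_contra hlt
    have hopen : IsOpen {t | K.toReal < ‖deriv (deriv E) t‖} :=
      isOpen_lt continuous_const h2.norm
    have hpos := hopen.measure_pos volume ⟨t, not_le.1 hlt⟩
    apply hpos.ne'
    refine measure_mono_null ?_ (ae_iff.1 hae)
    intro u hu hle
    have : ‖deriv (deriv E) u‖ ≤ K.toReal := by
      rw [← toReal_enorm]
      exact ENNReal.toReal_mono hKtop hle
    exact absurd this (not_le.2 hu)
  have := Convex.norm_image_sub_le_of_norm_deriv_le (f := deriv E) (s := univ) (x := y) (y := x)
    (fun t _ => h1.differentiable (by norm_num) t) (fun t _ => hall t) convex_univ trivial trivial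
  rw [← ofReal_norm, ← ofReal_norm, ← ENNReal.ofReal_toReal hKtop,
    ← ENNReal.ofReal_mul ENNReal.toReal_nonneg]
  exact ENNReal.ofReal_le_ofReal this

/-- integrability of the integrand of `Aop` for a.e. `s`. -/
lemma Aop_integrable {w k : ℝ → ℝ} (hw : MemLp w 2 volume) (hk : Integrable k)
    (hk0 : ∀ r, r ∉ Icc (-1:ℝ) 1 → k r = 0) :
    ∀ᵐ s ∂(volume.restrict (Icc (-1:ℝ) 1)), Integrable (fun r => w (r - s) * k r) := by
  set B := Icc (-2:ℝ) 2
  have hw1 : Integrable (B.indicator w) := by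
    rw [integrable_indicator_iff measurableSet_Icc]
    exact (hw.restrict B).integrable (by norm_num)
  have h := hk.ae_convolution_exists (ContinuousLinearMap.mul ℝ ℝ) hw1.comp_neg
  filter_upwards [ae_restrict_of_ae h, ae_restrict_mem measurableSet_Icc] with s h1 hs
  refine h1.integrable.congr (Filter.Eventually.of_forall fun r => ?_)
  simp only [ContinuousLinearMap.mul_apply', neg_sub]
  by_cases hr : r ∈ Icc (-1:ℝ) 1
  · rw [indicator_of_mem, mul_comm]
    simp only [B, mem_Icc] at *
    constructor <;> linarith [hr.1, hr.2, hs.1, hs.2]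
  · simp [hk0 r hr]

lemma comp_memLp {E : ℝ → ℝ} (hE : ContDiff ℝ 2 E)
    (hb : ∃ M : ℝ, ∀ x : ℝ, |deriv (deriv E) x| ≤ M) {g h : ℝ → ℝ} (hg : MemLp g 2 volume)
    (hh : MemLp h 2 volume) (hh0 : ∀ r, r ∉ Icc (-1:ℝ) 1 → h r = 0) :
    Integrable (fun r => deriv E ((1 / 2) * g r) * h r) := by
  set B := Icc (-1:ℝ) 1
  have h1 : ContDiff ℝ 1 (deriv E) := (contDiff_succ_iff_deriv (n := 1).1 hE).2.2
  have hKtop : eLpNorm (deriv (deriv E)) ⊤ volume ≠ ⊤ := by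
    obtain ⟨M, hM⟩ := hb
    exact (memLp_top_of_bound (h1.continuous_deriv le_rfl).aestronglyMeasurable M
      (Filter.Eventually.of_forall hM)).2.ne
  set K := (eLpNorm (deriv (deriv E)) ⊤ volume).toReal
  have hbd : ∀ x, ‖deriv E x‖ ≤ |deriv E 0| + K * |x| := by
    intro x
    have := ENNReal.toReal_mono (ENNReal.mul_ne_top hKtop (by simp)) (deriv_lip hE hb x 0)
    rw [ENNReal.toReal_mul, toReal_enorm, toReal_enorm, sub_zero] at this
    have h3 := norm_sub_norm_le (deriv E x) (deriv E 0)
    simp only [Real.norm_eq_abs] at *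
    linarith
  have hhi : Integrable h := by
    rw [← integrableOn_iff_integrable_of_support_subset (s := B)]
    · exact (hh.restrict B).integrable (by norm_num)
    · intro r hr
      by_contra hrB
      exact hr (hh0 r hrB)
  have hgh : Integrable (fun r => g r * h r) := hg.integrable_mul hh
  refine ((hhi.norm.const_mul |deriv E 0|).add (hgh.norm.const_mul (K / 2))).mono' ?_ ?_
  · exact (h1.continuous.comp_aestronglyMeasurable (hg.1.const_mul _)).mul hh.1
  · refine Filter.Eventually.of_forall fun r => ?_
    have := hbd (1 / 2 * g r)
    rw [norm_mul]
    simp only [Pi.add_apply, norm_mul, Real.norm_eq_abs, abs_mul] at *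
    norm_num at this
    calc _ ≤ _ := mul_le_mul_of_nonneg_right this (abs_nonneg (h r))
      _ = _ := by ring

lemma slice_bound (w 𝓔 : ℝ → ℝ) (hw : MemLp w 2 volume)
    (h𝓔 : ContDiff ℝ 2 𝓔) (h𝓔'' : ∃ M : ℝ, ∀ x : ℝ, |deriv (deriv 𝓔) x| ≤ M)
    (f₁ f₂ h : ℝ × ℝ → ℝ)
    (hf₁ : MemLp f₁ 2 volume) (hf₁supp : Function.support f₁ ⊆ unitDisk)
    (hf₂ : MemLp f₂ 2 volume) (hf₂supp : Function.support f₂ ⊆ unitDisk)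
    (hh : MemLp h 2 volume) (hhsupp : Function.support h ⊆ unitDisk) (θ : ℝ) :
    ∀ᵐ s ∂(volume.restrict (Icc (-1:ℝ) 1)),
      ‖Aop w (deriv 𝓔) f₁ h s θ - Aop w (deriv 𝓔) f₂ h s θ‖ₑ ≤
        ENNReal.ofReal (1 / 4) * eLpNorm (deriv (deriv 𝓔)) ⊤ volume * (eLpNorm w 2 volume *
          eLpNorm (fun r => radonT (f₁ - f₂) r θ * radonT h r θ) 2
            (volume.restrict (Icc (-1:ℝ) 1))) := by
  set B := Icc (-1:ℝ) 1
  set K := eLpNorm (deriv (deriv 𝓔)) ⊤ volume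
  have R1 := radonT_memLp hf₁ hf₁supp θ
  have R2 := radonT_memLp hf₂ hf₂supp θ
  have Rh := radonT_memLp hh hhsupp θ
  have Rh0 := radonT_zero hhsupp θ
  have I1 := Aop_integrable hw (comp_memLp h𝓔 h𝓔'' R1 Rh Rh0)
    (fun r hr => by simp [Rh0 r hr])
  have I2 := Aop_integrable hw (comp_memLp h𝓔 h𝓔'' R2 Rh Rh0)
    (fun r hr => by simp [Rh0 r hr])
  have hsub := radonT_sub hf₁ hf₁supp hf₂ hf₂supp θ
  have hg : AEStronglyMeasurable (fun r => radonT (f₁ - f₂) r θ * radonT h r θ) volume := by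
    refine AEStronglyMeasurable.mul ?_ Rh.1
    exact (R1.1.sub R2.1).congr (hsub.mono fun r hr => hr.symm)
  filter_upwards [I1, I2] with s i1 i2
  have e1 : Aop w (deriv 𝓔) f₁ h s θ - Aop w (deriv 𝓔) f₂ h s θ = (1 / 2) *
      ∫ r in B, (w (r - s) * (deriv 𝓔 ((1 / 2) * radonT f₁ r θ) * radonT h r θ) -
        w (r - s) * (deriv 𝓔 ((1 / 2) * radonT f₂ r θ) * radonT h r θ)) := by
    rw [setIntegral_eq_integral_of_forall_compl_eq_zero (fun r hr => by simp [Rh0 r hr]),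
      integral_sub i1 i2, mul_sub]
    simp only [Aop, mul_assoc]
  have hwm : MeasurePreserving (fun r : ℝ => r - s) volume volume :=
    measurePreserving_sub_right volume s
  have hws : AEStronglyMeasurable (fun r => w (r - s)) volume :=
    hw.1.comp_measurePreserving hwm
  have e2 : ∫⁻ r in B, ‖w (r - s) * (radonT (f₁ - f₂) r θ * radonT h r θ)‖ₑ ≤
      eLpNorm w 2 volume * eLpNorm (fun r => radonT (f₁ - f₂) r θ * radonT h r θ) 2
            (volume.restrict B) := by
    have := eLpNorm_smul_le_mul_eLpNorm (p := 2) (q := 2) (r := 1)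
      (μ := volume.restrict B) hg.restrict hws.restrict
    rw [eLpNorm_one_eq_lintegral_enorm] at this
    refine this.trans ?_
    gcongr
    refine (eLpNorm_mono_measure _ Measure.restrict_le_self).trans ?_
    exact (eLpNorm_comp_measurePreserving hw.1 hwm).le
  rw [e1, enorm_mul]
  have e3 : ‖∫ r in B, (w (r - s) * (deriv 𝓔 ((1 / 2) * radonT f₁ r θ) * radonT h r θ) -
        w (r - s) * (deriv 𝓔 ((1 / 2) * radonT f₂ r θ) * radonT h r θ))‖ₑ ≤
      ENNReal.ofReal (1 / 2) * K *
        ∫⁻ r in B, ‖w (r - s) * (radonT (f₁ - f₂) r θ * radonT h r θ)‖ₑ := by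
    refine (enorm_integral_le_lintegral_enorm _).trans ?_
    have hme : AEMeasurable (fun r => ‖w (r - s) * (radonT (f₁ - f₂) r θ * radonT h r θ)‖ₑ)
        (volume.restrict B) := (hws.restrict.mul hg.restrict).enorm
    rw [← lintegral_const_mul'' _ hme]
    refine lintegral_mono_ae (ae_restrict_of_ae ?_)
    filter_upwards [hsub] with r hr
    have hl := deriv_lip h𝓔 h𝓔'' ((1 / 2) * radonT f₁ r θ) ((1 / 2) * radonT f₂ r θ)
    rw [← mul_sub, ← hr, enorm_mul] at hl
    rw [← mul_sub, ← sub_mul, enorm_mul, enorm_mul, enorm_mul, enorm_mul]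
    have h12 : ‖(1 / 2 : ℝ)‖ₑ = ENNReal.ofReal (1 / 2) := Real.enorm_of_nonneg (by norm_num)
    rw [h12] at hl
    calc _ ≤ ‖w (r - s)‖ₑ * (K * (ENNReal.ofReal (1 / 2) * ‖radonT (f₁ - f₂) r θ‖ₑ)
          * ‖radonT h r θ‖ₑ) := by gcongr
      _ = _ := by ring
  have h12 : ‖(1 / 2 : ℝ)‖ₑ = ENNReal.ofReal (1 / 2) := Real.enorm_of_nonneg (by norm_num)
  have h14 : ENNReal.ofReal (1 / 4) = ENNReal.ofReal (1 / 2) * ENNReal.ofReal (1 / 2) := by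
    rw [← ENNReal.ofReal_mul (by norm_num)]; norm_num
  rw [h12, h14]
  calc _ ≤ ENNReal.ofReal (1 / 2) * (ENNReal.ofReal (1 / 2) * K * (eLpNorm w 2 volume *
          eLpNorm (fun r => radonT (f₁ - f₂) r θ * radonT h r θ) 2 (volume.restrict B))) := by
        gcongr
        refine e3.trans ?_
        gcongr
    _ = _ := by ring

lemma holder4 {α : Type*} [MeasurableSpace α] {μ : Measure α} {a b : α → ℝ}
    (ha : AEStronglyMeasurable a μ) (hb : AEStronglyMeasurable b μ) :
    eLpNorm (fun p => a p * b p) 2 μ ≤ eLpNorm a 4 μ * eLpNorm b 4 μ := by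
  have : ENNReal.HolderTriple 4 4 2 := ⟨by
    have h4 : (4 : ℝ≥0∞) = 2 * 2 := by norm_num
    rw [h4, ENNReal.mul_inv (by norm_num) (by norm_num), ← mul_add, ENNReal.inv_two_add_inv_two,
      mul_one]⟩
  have := eLpNorm_smul_le_mul_eLpNorm (p := 4) (q := 4) (r := 2) hb ha
  exact this

/-- For `w ∈ L²(ℝ)` and `𝓔` twice continuously differentiable with
`𝓔''` bounded, and `f₁, f₂, h ∈ L²(Ω_D)` with `R(f₁-f₂), Rh ∈ L⁴(Ω_S)`:
`‖A(f₁)h − A(f₂)h‖_{L²(Ω_S)}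
  ≤ ½·‖w‖_{L²}·‖𝓔''‖_{L^∞}·‖R(f₁−f₂)‖_{L⁴(Ω_S)}·‖Rh‖_{L⁴(Ω_S)}`. -/
theorem Aop_lipschitz (w 𝓔 : ℝ → ℝ) (hw : MemLp w 2 volume)
    (h𝓔 : ContDiff ℝ 2 𝓔) (h𝓔'' : ∃ M : ℝ, ∀ x : ℝ, |deriv (deriv 𝓔) x| ≤ M)
    (f₁ f₂ h : ℝ × ℝ → ℝ)
    (hf₁ : MemLp f₁ 2 volume) (hf₁supp : Function.support f₁ ⊆ unitDisk)
    (hf₂ : MemLp f₂ 2 volume) (hf₂supp : Function.support f₂ ⊆ unitDisk)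
    (hh : MemLp h 2 volume) (hhsupp : Function.support h ⊆ unitDisk)
    (hR12 : MemLp (fun p : ℝ × ℝ => radonT (f₁ - f₂) p.1 p.2) 4 (volume.restrict sinoDom))
    (hRh : MemLp (fun p : ℝ × ℝ => radonT h p.1 p.2) 4 (volume.restrict sinoDom)) :
    eLpNorm
        (fun p : ℝ × ℝ =>
          Aop w (deriv 𝓔) f₁ h p.1 p.2 - Aop w (deriv 𝓔) f₂ h p.1 p.2) 2
        (volume.restrict sinoDom) ≤
      ENNReal.ofReal (1 / 2) * eLpNorm w 2 volume * eLpNorm (deriv (deriv 𝓔)) ⊤ volume *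
        eLpNorm (fun p : ℝ × ℝ => radonT (f₁ - f₂) p.1 p.2) 4 (volume.restrict sinoDom) *
        eLpNorm (fun p : ℝ × ℝ => radonT h p.1 p.2) 4 (volume.restrict sinoDom) := by
  set N4a := eLpNorm (fun p : ℝ × ℝ => radonT (f₁ - f₂) p.1 p.2) 4 (volume.restrict sinoDom)
  set N4b := eLpNorm (fun p : ℝ × ℝ => radonT h p.1 p.2) 4 (volume.restrict sinoDom)
  set K := eLpNorm (deriv (deriv 𝓔)) ⊤ volume
  set W := eLpNorm w 2 volume
  set G : ℝ × ℝ → ℝ := fun p => radonT (f₁ - f₂) p.1 p.2 * radonT h p.1 p.2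
  set B := Icc (-1:ℝ) 1
  set T := Ico (0:ℝ) (2 * π)
  have hprod : (volume.restrict sinoDom : Measure (ℝ × ℝ)) =
      (volume.restrict B).prod (volume.restrict T) := by
    rw [Measure.prod_restrict]; rfl
  have hGm : AEStronglyMeasurable G (volume.restrict sinoDom) := hR12.1.mul hRh.1
  have hG : eLpNorm G 2 (volume.restrict sinoDom) ≤ N4a * N4b :=
    holder4 hR12.1 hRh.1
  set C := ENNReal.ofReal (1 / 4) * K * W
  have main : eLpNorm (fun p : ℝ × ℝ =>
      Aop w (deriv 𝓔) f₁ h p.1 p.2 - Aop w (deriv 𝓔) f₂ h p.1 p.2) 2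
        (volume.restrict sinoDom) ^ 2 ≤
      2 * (C ^ 2 * eLpNorm G 2 (volume.restrict sinoDom) ^ 2) := by
    have hfin : C ^ 2 ≠ ⊤ := by
      refine ENNReal.pow_ne_top (ENNReal.mul_ne_top (ENNReal.mul_ne_top (by simp) ?_) hw.2.ne)
      obtain ⟨M, hM⟩ := h𝓔''
      have h1 : ContDiff ℝ 1 (deriv 𝓔) := (contDiff_succ_iff_deriv (n := 1).1 h𝓔).2.2
      exact (memLp_top_of_bound (h1.continuous_deriv le_rfl).aestronglyMeasurable M
        (Filter.Eventually.of_forall hM)).2.ne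
    rw [sq_aux, sq_aux]
    rw [hprod] at hGm ⊢
    have hGe : AEMeasurable (fun p => ‖G p‖ₑ ^ 2)
      ((volume.restrict B).prod (volume.restrict T)) := hGm.enorm.pow_const 2
    rw [lintegral_prod_symm (fun p => ‖G p‖ₑ ^ 2) hGe,
      ← lintegral_const_mul' _ _ hfin, ← lintegral_const_mul' 2 _ (by norm_num)]
    rw [← lintegral_prod_swap]
    refine (lintegral_prod_le _).trans (lintegral_mono fun θ => ?_)
    simp only [Prod.swap_prod_mk]
    have hb := slice_bound w 𝓔 hw h𝓔 h𝓔'' f₁ f₂ h hf₁ hf₁supp hf₂ hf₂supp hh hhsupp θ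
    calc _ ≤ ∫⁻ s in B, C ^ 2 * ∫⁻ r in B, ‖G (r, θ)‖ₑ ^ 2 := by
          refine lintegral_mono_ae (hb.mono fun s hs => ?_)
          refine (pow_le_pow_left₀ zero_le hs 2).trans (le_of_eq ?_)
          rw [← mul_assoc, mul_pow, sq_aux]
      _ = _ := by
          rw [lintegral_const, mul_comm]
          congr 1
          norm_num [B]
  rw [← ENNReal.pow_le_pow_left_iff two_ne_zero]
  refine main.trans ?_
  have hhalf : ENNReal.ofReal (1 / 2) = 2 * ENNReal.ofReal (1 / 4) := by
    rw [← ENNReal.ofReal_ofNat 2, ← ENNReal.ofReal_mul (by norm_num)]; norm_num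
  rw [hhalf]
  calc 2 * (C ^ 2 * eLpNorm G 2 (volume.restrict sinoDom) ^ 2)
      ≤ 4 * (C ^ 2 * (N4a * N4b) ^ 2) := by gcongr; norm_num
    _ = _ := by simp only [C]; ring
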